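/- For each Dyck path λ of order n and each linear extension σ ∈ L(P_λ), the art statistic of DTS(λ,σ) equals the number of inversions of σ: art(DTS(λ,σ)) = inv(σ). -/

import Mathlib

open Finset

noncomputable section

/-- A Dyck path of order `n`: a word of `2n` steps (`true` = up-step `(+1,+1)`,
`false` = down-step `(+1,-1)`) from `(-n,0)` to `(n,0)` staying weakly above the x-axis. -/
structure DyckPath (n : ℕ) where
  step : Fin (2 * n) → Bool
  balanced : (Finset.univ.filter fun i => step i = true).card = n
  nonneg : ∀ k : ℕ, k ≤ 2 * n →
    (Finset.univ.filter fun i : Fin (2 * n) => (i : ℕ) < k ∧ step i = false).card ≤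
      (Finset.univ.filter fun i : Fin (2 * n) => (i : ℕ) < k ∧ step i = true).card

namespace DyckPath

/-- Height of the path above column `x` (columns run from `-n` to `n`). -/
def ht {n : ℕ} (P : DyckPath n) (x : ℤ) : ℤ :=
  ((Finset.univ.filter fun i : Fin (2 * n) => ((i : ℕ) : ℤ) < x + n ∧ P.step i = true).card : ℤ) -
    ((Finset.univ.filter fun i : Fin (2 * n) => ((i : ℕ) : ℤ) < x + n ∧ P.step i = false).card : ℤ)

/-- Height of the path at lattice point number `k`, `0 ≤ k ≤ 2n`
(point `k` lies at column `k - n`). -/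
def pt {n : ℕ} (P : DyckPath n) (k : ℕ) : ℤ := P.ht ((k : ℤ) - n)

end DyckPath

/-- `IsChord P p q`: the up-step at (0-indexed) position `p` matches the down-step at
position `q`, forming a chord of `P`. -/
def IsChord {n : ℕ} (P : DyckPath n) (p q : ℕ) : Prop :=
  p < q ∧ q < 2 * n ∧
    (∃ hp : p < 2 * n, P.step ⟨p, hp⟩ = true) ∧
    (∃ hq : q < 2 * n, P.step ⟨q, hq⟩ = false) ∧
    P.pt (q + 1) = P.pt p ∧
    ∀ m : ℕ, p < m → m ≤ q → P.pt p < P.pt m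

/-- A natural labeling of the chord poset of `P`: the chord labeled `i` has its up-step at
(0-indexed) position `l i` and matching down-step at position `r i`; distinct labels name
distinct chords; and if one chord is nested inside another it receives a larger label. -/
structure ChordLabeling {n : ℕ} (P : DyckPath n) where
  l : Fin n → ℕ
  r : Fin n → ℕ
  chord : ∀ i, IsChord P (l i) (r i)
  inj : Function.Injective l
  natural : ∀ i j : Fin n, l j < l i → r i < r j → j < i

/-- The length of the chord labeled `i`: the number of up steps of `P` between and
including its two endpoints. -/
def chordLen {n : ℕ} {P : DyckPath n} (C : ChordLabeling P) (i : Fin n) : ℕ :=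
  (Finset.univ.filter fun m : Fin (2 * n) =>
    C.l i ≤ (m : ℕ) ∧ (m : ℕ) ≤ C.r i ∧ P.step m = true).card

/-- The growth sequence `p_1, …, p_n` associated with a natural chord labeling:
`p i = #{j<i : l j < l i} + #{j<i : r j < l i}`. -/
def seqOf {n : ℕ} {P : DyckPath n} (C : ChordLabeling P) (i : Fin n) : ℕ :=
  (Finset.univ.filter fun j : Fin n => j < i ∧ C.l j < C.l i).card +
    (Finset.univ.filter fun j : Fin n => j < i ∧ C.r j < C.l i).card

/-- `σ` is the standardization of the word `w` (with distinct letters). -/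
def IsStandardization {n : ℕ} (w : Fin n → ℕ) (σ : Equiv.Perm (Fin n)) : Prop :=
  ∀ i j : Fin n, σ i < σ j ↔ w i < w j

/-- `σ ∈ 𝓛(P_λ)`: σ is `L₀ ∘ L⁻¹` for some natural labeling `L` of the chord poset,
equivalently the standardization of the word of left endpoints of a natural labeling. -/
def LinExt {n : ℕ} (P : DyckPath n) (σ : Equiv.Perm (Fin n)) : Prop :=
  ∃ C : ChordLabeling P, IsStandardization C.l σ

/-- Successor index in `Fin n` (used only under the guard `i+1 < n`). -/
def nextIdx {n : ℕ} (i : Fin n) : Fin n := ⟨((i : ℕ) + 1) % n, Nat.mod_lt _ i.pos⟩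

/-- Descent set of a word: positions `i` with `i+1 < n` and `w i > w (i+1)`. -/
def descentFinset {n : ℕ} (w : Fin n → ℕ) : Finset (Fin n) :=
  Finset.univ.filter fun i => (i : ℕ) + 1 < n ∧ w (nextIdx i) < w i

/-- Number of inversions of a word. -/
def wordInv {n : ℕ} (w : Fin n → ℕ) : ℕ :=
  (Finset.univ.filter fun p : Fin n × Fin n => p.1 < p.2 ∧ w p.2 < w p.1).card

/-- The word of values of a permutation. -/
def permWord {n : ℕ} (σ : Equiv.Perm (Fin n)) : Fin n → ℕ := fun i => (σ i : ℕ)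

/-- inv(σ). -/
def permInv {n : ℕ} (σ : Equiv.Perm (Fin n)) : ℕ := wordInv (permWord σ)

/-- des(σ). -/
def permDes {n : ℕ} (σ : Equiv.Perm (Fin n)) : ℕ := (descentFinset (permWord σ)).card

/-- `REM_i(w) = {k > i : w i > w k > w (i+1)}`, the right embraced numbers. -/
def remSet {n : ℕ} (w : Fin n → ℕ) (i : Fin n) : Finset (Fin n) :=
  Finset.univ.filter fun k => i < k ∧ w (nextIdx i) < w k ∧ w k < w i

/-- desdif(σ) = Σ_{i ∈ DES σ} (σ i − σ (i+1)). -/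
def desdif {n : ℕ} (σ : Equiv.Perm (Fin n)) : ℕ :=
  ∑ i ∈ descentFinset (permWord σ), (permWord σ i - permWord σ (nextIdx i))

/-- res(σ) = Σ_{i ∈ DES σ} #{k < i : σ i > σ k > σ (i+1)}. -/
def resStat {n : ℕ} (σ : Equiv.Perm (Fin n)) : ℕ :=
  ∑ i ∈ descentFinset (permWord σ),
    (Finset.univ.filter fun k : Fin n =>
      k < i ∧ permWord σ (nextIdx i) < permWord σ k ∧ permWord σ k < permWord σ i).card

/-- The Mahonian statistic mad(σ) = desdif(σ) + res(σ). -/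
def mad {n : ℕ} (σ : Equiv.Perm (Fin n)) : ℕ := desdif σ + resStat σ

/-- σ avoids the pattern 231. -/
def Avoids231 {n : ℕ} (σ : Equiv.Perm (Fin n)) : Prop :=
  ¬∃ i j k : Fin n, i < j ∧ j < k ∧ σ k < σ i ∧ σ i < σ j

/-- The boxes of the skew shape `lam/mu` (with `mu` weakly above `lam`), each box
recorded by its bottom corner (a lattice point `(x, z)` with `z ≡ x + n (mod 2)`). -/
def skewCells {n : ℕ} (lam mu : DyckPath n) : Finset (ℤ × ℤ) :=
  ((Finset.Icc (-(n : ℤ)) n) ×ˢ (Finset.Icc (0 : ℤ) n)).filter fun c =>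
    lam.ht c.1 ≤ c.2 ∧ c.2 + 2 ≤ mu.ht c.1 ∧ (c.2 - c.1 - n) % 2 = 0

/-- A Dyck tile, recorded by the set of bottom corners of its boxes: these form
a Dyck-path shape, i.e. a ±1-step lattice path whose two ends are lowest. -/
def IsDyckTile (t : Finset (ℤ × ℤ)) : Prop :=
  ∃ (a b : ℤ) (f : ℤ → ℤ), a ≤ b ∧
    (∀ x : ℤ, a ≤ x → x < b → f (x + 1) = f x + 1 ∨ f (x + 1) = f x - 1) ∧
    f b = f a ∧ (∀ x : ℤ, a ≤ x → x ≤ b → f a ≤ f x) ∧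
    t = (Finset.Icc a b).image fun x => (x, f x)

/-- A Dyck tiling of order `n`: a tiling of the skew shape between two Dyck paths of
order `n` by Dyck tiles. -/
structure DyckTiling (n : ℕ) where
  lower : DyckPath n
  upper : DyckPath n
  below : ∀ x : ℤ, lower.ht x ≤ upper.ht x
  tiles : Finset (Finset (ℤ × ℤ))
  isDyck : ∀ t ∈ tiles, IsDyckTile t
  disj : ∀ t ∈ tiles, ∀ u ∈ tiles, t ≠ u → Disjoint t u
  cover : tiles.biUnion id = skewCells lower upper

namespace DyckTiling

/-- Number of boxes of the skew shape. -/
def area {n : ℕ} (T : DyckTiling n) : ℕ := (skewCells T.lower T.upper).card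

/-- Number of tiles. -/
def numTiles {n : ℕ} (T : DyckTiling n) : ℕ := T.tiles.card

/-- art(T) = (area(T) + tiles(T)) / 2. -/
def art {n : ℕ} (T : DyckTiling n) : ℕ := (T.area + T.numTiles) / 2

/-- dis(T): the number of step positions where the lower path steps down while the
upper path steps up. -/
def dis {n : ℕ} (T : DyckTiling n) : ℕ :=
  (Finset.univ.filter fun i : Fin (2 * n) =>
    T.lower.step i = false ∧ T.upper.step i = true).card

/-- Cover-inclusiveness: whenever a tile has a box strictly above a box of another tile,
its horizontal extent is contained in that of the other tile. -/
def CoverInclusive {n : ℕ} (T : DyckTiling n) : Prop :=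
  ∀ t ∈ T.tiles, ∀ u ∈ T.tiles,
    (∃ p ∈ t, ∃ q ∈ u, (p : ℤ × ℤ).1 = (q : ℤ × ℤ).1 ∧ (q : ℤ × ℤ).2 < (p : ℤ × ℤ).2) →
    ∀ p ∈ t, ∃ y : ℤ, ((p : ℤ × ℤ).1, y) ∈ u

end DyckTiling

/-- Height function of the spread at column `s` of a Dyck path. -/
def spreadHt {n : ℕ} (P : DyckPath n) (s x : ℤ) : ℤ :=
  if x < s then P.ht (x + 1) else if x = s then P.ht s + 1 else P.ht (x - 1)

/-- Spread of a tile at column `s`: points left of `s` move left, points right of `s`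
move right, and a point at column `s` is duplicated upward. -/
def spreadTile (s : ℤ) (t : Finset (ℤ × ℤ)) : Finset (ℤ × ℤ) :=
  ((t.filter fun p => p.1 ≤ s).image fun p => (p.1 - 1, p.2)) ∪
    ((t.filter fun p => p.1 = s).image fun p => (p.1, p.2 + 1)) ∪
    ((t.filter fun p => s ≤ p.1).image fun p => (p.1 + 1, p.2))

/-- Spread of a set of tiles at column `s`. -/
def spreadTiles (s : ℤ) (ts : Finset (Finset (ℤ × ℤ))) : Finset (Finset (ℤ × ℤ)) :=
  ts.image (spreadTile s)

/-- Column `c` is eligible for a tiling with upper-boundary height function `h` and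
tile set `ts`: the upper boundary has an up step ending at column `c`, and its point at
column `c` is not the top corner of a one-box tile. -/
def EligibleCol (h : ℤ → ℤ) (ts : Finset (Finset (ℤ × ℤ))) (c : ℤ) : Prop :=
  h c = h (c - 1) + 1 ∧ ({(c, h c - 2)} : Finset (ℤ × ℤ)) ∉ ts

/-- `T'` is the result of the strip-grow map applied to `(T, s)`: spread `T` at `s` and
add a one-box tile on each up step of the (spread) upper boundary starting at a column
`≥ s` (i.e. strictly to the right of column `s`). -/
def StripGrowRel {n : ℕ} (T : DyckTiling n) (s : ℤ) (T' : DyckTiling (n + 1)) : Prop :=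
  (∀ x : ℤ, T'.lower.ht x = spreadHt T.lower s x) ∧
  (∀ x : ℤ, T'.upper.ht x =
    if s ≤ x ∧ spreadHt T.upper s (x + 1) = spreadHt T.upper s x + 1 then
      spreadHt T.upper s x + 2
    else spreadHt T.upper s x) ∧
  T'.tiles = spreadTiles s T.tiles ∪
    ((Finset.Icc s (n : ℤ)).filter fun x =>
        spreadHt T.upper s (x + 1) = spreadHt T.upper s x + 1).image
      (fun x => ({(x, spreadHt T.upper s x)} : Finset (ℤ × ℤ)))

/-- `T'` is the result of the ribbon-grow map applied to `(T, s)`: spread `T` at `s`,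
and if the special column `Q` of the spread tiling is strictly right of `s`, add a
ribbon of one-box tiles at all columns strictly between `s` and `Q`. -/
def RibbonGrowRel {n : ℕ} (T : DyckTiling n) (s : ℤ) (T' : DyckTiling (n + 1)) : Prop :=
  (∀ x : ℤ, T'.lower.ht x = spreadHt T.lower s x) ∧
  ∃ Q : ℤ,
    EligibleCol (spreadHt T.upper s) (spreadTiles s T.tiles) Q ∧
    (∀ c : ℤ, EligibleCol (spreadHt T.upper s) (spreadTiles s T.tiles) c → c ≤ Q) ∧
    (∀ x : ℤ, T'.upper.ht x =
      if s < x ∧ x < Q then spreadHt T.upper s x + 2 else spreadHt T.upper s x) ∧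
    T'.tiles = spreadTiles s T.tiles ∪
      (Finset.Ioo s Q).image (fun x => ({(x, spreadHt T.upper s x)} : Finset (ℤ × ℤ)))

/-- `s` is the special column of `T`: its rightmost eligible column. -/
def SpecialCol {n : ℕ} (T : DyckTiling n) (s : ℤ) : Prop :=
  EligibleCol T.upper.ht T.tiles s ∧ ∀ c : ℤ, EligibleCol T.upper.ht T.tiles c → c ≤ s

/-- In the strip-shrink map applied to `T'` with special column `s`, a one-box tile is
removed at column `x`: `x` is right of `s` and there is a one-box tile there that is
part of an up step of the upper boundary. -/
def StripRemovedAt {n : ℕ} (T' : DyckTiling n) (s x : ℤ) : Prop :=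
  s < x ∧ T'.upper.ht x = T'.upper.ht (x - 1) + 1 ∧
    ({(x, T'.upper.ht x - 2)} : Finset (ℤ × ℤ)) ∈ T'.tiles

instance {n : ℕ} (T' : DyckTiling n) (s x : ℤ) : Decidable (StripRemovedAt T' s x) := by
  unfold StripRemovedAt; infer_instance

/-- `(T, s)` is the result of the strip-shrink map applied to `T'`: `s` is the special
column of `T'`; all one-box tiles right of `s` lying on up steps of the upper boundary
are removed; and the result is the spread of `T` at `s`. -/
def StripShrinkRel {n : ℕ} (T' : DyckTiling (n + 1)) (T : DyckTiling n) (s : ℤ) : Prop :=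
  SpecialCol T' s ∧
  (∀ x : ℤ, spreadHt T.lower s x = T'.lower.ht x) ∧
  (∀ x : ℤ, spreadHt T.upper s x =
    if StripRemovedAt T' s x then T'.upper.ht x - 2 else T'.upper.ht x) ∧
  spreadTiles s T.tiles =
    T'.tiles \ (((Finset.Ioc s ((n : ℤ) + 1)).filter fun x => StripRemovedAt T' s x).image
      fun x => ({(x, T'.upper.ht x - 2)} : Finset (ℤ × ℤ)))

/-- `(T, s)` is the result of the ribbon-shrink map applied to `T'`: `s` is the special
column of `T'`; the maximal run of topmost one-box tiles in columns `s+1, s+2, …` is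
removed; and the result is the spread of `T` at `s`. -/
def RibbonShrinkRel {n : ℕ} (T' : DyckTiling (n + 1)) (T : DyckTiling n) (s : ℤ) : Prop :=
  SpecialCol T' s ∧
  ∃ r : ℤ, s < r ∧
    (∀ x : ℤ, s < x → x < r → ({(x, T'.upper.ht x - 2)} : Finset (ℤ × ℤ)) ∈ T'.tiles) ∧
    ({(r, T'.upper.ht r - 2)} : Finset (ℤ × ℤ)) ∉ T'.tiles ∧
    (∀ x : ℤ, spreadHt T.lower s x = T'.lower.ht x) ∧
    (∀ x : ℤ, spreadHt T.upper s x =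
      if s < x ∧ x < r then T'.upper.ht x - 2 else T'.upper.ht x) ∧
    spreadTiles s T.tiles =
      T'.tiles \ ((Finset.Ioo s r).image fun x => ({(x, T'.upper.ht x - 2)} : Finset (ℤ × ℤ)))

/-- `IsDTS n p T`: `T` is the Dyck tiling `DTS(p_1, …, p_n)` (indices 0-based, so the
growth column for step `i` is `p i - i`). -/
inductive IsDTS : (n : ℕ) → (Fin n → ℕ) → DyckTiling n → Prop where
  | nil (p : Fin 0 → ℕ) (T : DyckTiling 0) : IsDTS 0 p T
  | cons (n : ℕ) (p : Fin (n + 1) → ℕ) (T : DyckTiling n) (T' : DyckTiling (n + 1)) :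
      IsDTS n (fun i => p i.castSucc) T →
      StripGrowRel T ((p (Fin.last n) : ℤ) - n) T' → IsDTS (n + 1) p T'

/-- `IsDTR n p T`: `T` is the Dyck tiling `DTR(p_1, …, p_n)`. -/
inductive IsDTR : (n : ℕ) → (Fin n → ℕ) → DyckTiling n → Prop where
  | nil (p : Fin 0 → ℕ) (T : DyckTiling 0) : IsDTR 0 p T
  | cons (n : ℕ) (p : Fin (n + 1) → ℕ) (T : DyckTiling n) (T' : DyckTiling (n + 1)) :
      IsDTR n (fun i => p i.castSucc) T →
      RibbonGrowRel T ((p (Fin.last n) : ℤ) - n) T' → IsDTR (n + 1) p T'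

/-- `T = DTS(λ, σ)`. -/
def IsDTSof {n : ℕ} (lam : DyckPath n) (σ : Equiv.Perm (Fin n)) (T : DyckTiling n) : Prop :=
  ∃ C : ChordLabeling lam, IsStandardization C.l σ ∧ IsDTS n (seqOf C) T

/-- `T = DTR(λ, σ)`. -/
def IsDTRof {n : ℕ} (lam : DyckPath n) (σ : Equiv.Perm (Fin n)) (T : DyckTiling n) : Prop :=
  ∃ C : ChordLabeling lam, IsStandardization C.l σ ∧ IsDTR n (seqOf C) T

/-- Increment `a` if it exceeds `p`. -/
def bump (p a : ℕ) : ℕ := if p < a then a + 1 else a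

/-- The perfect matching `match(p_1, …, p_n)` of `{1, …, 2n}`. -/
def matchSeq : (n : ℕ) → (Fin n → ℕ) → Finset (ℕ × ℕ)
  | 0, _ => ∅
  | n + 1, p =>
    ((matchSeq n fun i => p i.castSucc).image fun q =>
      (bump (p (Fin.last n)) q.1, bump (p (Fin.last n)) q.2)) ∪
      {(p (Fin.last n) + 1, 2 * (n + 1))}

/-- The number of nestings of a matching: pairs `(a,b)`, `(c,d)` with `c < a < b < d`. -/
def nestings (M : Finset (ℕ × ℕ)) : ℕ :=
  ((M ×ˢ M).filter fun q => q.2.1 < q.1.1 ∧ q.1.1 < q.1.2 ∧ q.1.2 < q.2.2).card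

/-- `w` is the min-word of `M`: the list of the smaller elements of the pairs of `M`,
sorted by the larger elements. -/
def IsMinWord (n : ℕ) (M : Finset (ℕ × ℕ)) (w : Fin n → ℕ) : Prop :=
  ∃ b : Fin n → ℕ, StrictMono b ∧ (∀ i, w i < b i) ∧
    M = Finset.univ.image fun i => (w i, b i)

/-- The number of tiles of `T` containing boxes over both endpoint columns of the
chord with endpoints at step positions `p < q`. -/
def chordTileCount {n : ℕ} (T : DyckTiling n) (p q : ℕ) : ℕ :=
  (T.tiles.filter fun t =>
    (∃ c ∈ t, (c : ℤ × ℤ).1 = (p : ℤ) + 1 - n) ∧ (∃ c ∈ t, (c : ℤ × ℤ).1 = (q : ℤ) - n)).card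

/-- A Dyck tableau of order `n` over the zigzag path `Z` of order `n+1`: a skew shape
`Z/μ` with `n` dots, one in each column of the skew shape through a valley of `Z`. -/
structure DyckTableau (n : ℕ) (Z : DyckPath (n + 1)) where
  upper : DyckPath (n + 1)
  below : ∀ x : ℤ, Z.ht x ≤ upper.ht x
  dots : Finset (ℤ × ℤ)
  sub : dots ⊆ skewCells Z upper
  card_dots : dots.card = n
  valley : ∀ x : ℤ, Z.ht (x - 1) = Z.ht x + 1 → Z.ht (x + 1) = Z.ht x + 1 →
    (dots.filter fun c => c.1 = x).card = 1

/-- The `q`-integer `[m]_q = 1 + q + ⋯ + q^(m-1)` as a polynomial. -/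
def qint (m : ℕ) : Polynomial ℤ := ∑ i ∈ Finset.range m, Polynomial.X ^ i

/-- The `q`-factorial `[n]_q!`. -/
def qfact (n : ℕ) : Polynomial ℤ := ∏ i ∈ Finset.range n, qint (i + 1)

/-!
Strip-growing at column `s` spreads both boundary paths, which enlarges the area between them by
their height difference at `s`, and then adds `k` boxes, each of which is a tile. Here `2k` is
`n - s` minus the height of the upper path at `s`, so that the upper path cancels: `area + tiles`
grows by `n - s` minus the height of the lower path at `s`, i.e. by twice the number of up steps of
the lower path to the right of `s`. Since the lower path is the one traced by the chords added so
far, these up steps are the left endpoints exceeding that of the new chord, that is, the inversions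
ending at the new letter.
-/

section IntervalSums

lemma sum_Ico_add_sum_Ico {α M : Type*} [LinearOrder α] [LocallyFiniteOrder α] [AddCommMonoid M]
    (f : α → M) {a b c : α} (hab : a ≤ b) (hbc : b ≤ c) :
    ∑ x ∈ Ico a b, f x + ∑ x ∈ Ico b c, f x = ∑ x ∈ Ico a c, f x := by
  rw [← sum_union (Ico_disjoint_Ico_consecutive a b c), Ico_union_Ico_eq_Ico hab hbc]

lemma mul_card_Ico_filter_modEq_left {a b r : ℤ} (hr : 0 < r) (hab : a ≤ b) (h : r ∣ b - a) :
    r * (#{z ∈ Ico a b | z ≡ a [ZMOD r]} : ℤ) = b - a := by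
  obtain ⟨k, hk⟩ := h
  have hk₀ : 0 ≤ k := by
    by_contra! hneg
    nlinarith
  have hquot : ((b : ℚ) - a) / r = (k : ℤ) := by
    rw [div_eq_iff (by positivity), mul_comm]
    exact_mod_cast hk
  rw [Int.Ico_filter_modEq_card a b hr, hquot]
  simp [hk₀, hk]

lemma two_mul_card_Ico_filter_ascent (f : ℤ → ℤ) {a b : ℤ} (hab : a ≤ b)
    (hf : ∀ x, a ≤ x → x < b → f (x + 1) = f x + 1 ∨ f (x + 1) = f x - 1) :
    2 * (#{x ∈ Ico a b | f (x + 1) = f x + 1} : ℤ) = b - a + f b - f a := by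
  induction b, hab using Int.leInduction with
  | base => simp
  | succ b hab ih =>
    have ih := ih fun x hax hxb => hf x hax (by lia)
    rw [← insert_Ico_right_eq_Ico_add_one hab, filter_insert]
    rcases hf b hab (by lia) with hup | hdown
    · rw [if_pos hup, card_insert_of_notMem (by simp)]
      push_cast
      lia
    · rw [if_neg (by lia)]
      lia

end IntervalSums

namespace DyckPath

variable {n : ℕ} (P : DyckPath n)

lemma ht_eq_sum (x : ℤ) :
    P.ht x = ∑ i ∈ {i : Fin (2 * n) | ((i : ℕ) : ℤ) < x + n}, if P.step i then (1 : ℤ) else -1 := by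
  simp [ht, sum_ite, filter_filter, sub_eq_add_neg]

lemma ht_of_le_neg {x : ℤ} (hx : x ≤ -n) : P.ht x = 0 := by
  rw [ht_eq_sum, filter_false_of_mem fun i _ => by lia, sum_empty]

lemma ht_of_ge {x : ℤ} (hx : n ≤ x) : P.ht x = 0 := by
  have hdown : #{i | P.step i = false} = n := by
    have := card_filter_add_card_filter_not (s := univ) (P.step · = true)
    simp only [Bool.not_eq_true, P.balanced, card_univ, Fintype.card_fin] at this
    lia
  have hall : ∀ i : Fin (2 * n), ((i : ℕ) : ℤ) < x + n := fun i => by omega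
  simp only [ht, hall, true_and, P.balanced, hdown, sub_self]

lemma ht_nonneg (x : ℤ) : 0 ≤ P.ht x := by
  rcases le_total x (-n) with hx | hneg
  · rw [P.ht_of_le_neg hx]
  rcases le_total (n : ℤ) x with hx | hpos
  · rw [P.ht_of_ge hx]
  have hcount := P.nonneg (x + n).toNat (by lia)
  have hcol : ∀ i : Fin (2 * n), (i : ℕ) < (x + n).toNat ↔ ((i : ℕ) : ℤ) < x + n := fun i => by lia
  simp only [hcol] at hcount
  unfold ht
  lia

lemma ht_le (x : ℤ) : P.ht x ≤ n := by
  have : #{i : Fin (2 * n) | ((i : ℕ) : ℤ) < x + n ∧ P.step i = true} ≤ n :=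
    (card_le_card (monotone_filter_right _ fun _ _ h => h.2)).trans P.balanced.le
  unfold ht
  lia

lemma ht_add_one_of_step (i : Fin (2 * n)) :
    P.ht ((i : ℕ) - n + 1) = P.ht ((i : ℕ) - n) + if P.step i then 1 else -1 := by
  have hinsert : univ.filter (fun j : Fin (2 * n) => ((j : ℕ) : ℤ) < (i : ℕ) - n + 1 + n) =
      insert i (univ.filter fun j : Fin (2 * n) => ((j : ℕ) : ℤ) < (i : ℕ) - n + n) := by
    ext j
    simp only [mem_filter, mem_univ, true_and, mem_insert, Fin.ext_iff]
    lia
  rw [ht_eq_sum, ht_eq_sum, hinsert, sum_insert (by simp), add_comm]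

lemma ht_add_one {x : ℤ} (hneg : -n ≤ x) (hpos : x < n) :
    P.ht (x + 1) = P.ht x + 1 ∨ P.ht (x + 1) = P.ht x - 1 := by
  obtain ⟨k, hk⟩ := Int.eq_ofNat_of_zero_le (a := x + n) (by lia)
  obtain rfl : x = k - n := by lia
  have hstep := P.ht_add_one_of_step ⟨k, by lia⟩
  split_ifs at hstep
  exacts [.inl hstep, .inr hstep]

lemma ht_modEq {x : ℤ} (hneg : -n ≤ x) (hpos : x ≤ n) : P.ht x ≡ x + n [ZMOD 2] := by
  unfold Int.ModEq
  induction x, hneg using Int.leInduction with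
  | base => simp [P.ht_of_le_neg]
  | succ x hneg ih =>
    have := ih (by lia)
    rcases P.ht_add_one hneg (by lia) with h | h <;> lia

/-- The sum of the heights of the lattice points of a Dyck path, which measures the area below
it. -/
def htSum : ℤ := ∑ x ∈ Icc (-(n : ℤ)) n, P.ht x

end DyckPath

lemma two_mul_card_skewCells {n : ℕ} {lam mu : DyckPath n} (h : ∀ x, lam.ht x ≤ mu.ht x) :
    2 * (#(skewCells lam mu) : ℤ) = mu.htSum - lam.htSum := by
  unfold skewCells DyckPath.htSum
  rw [card_filter, sum_product, Nat.cast_sum, mul_sum, ← sum_sub_distrib]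
  refine sum_congr rfl fun x hx => ?_
  rw [mem_Icc] at hx
  have hlam : lam.ht x % 2 = (x + n) % 2 := lam.ht_modEq hx.1 hx.2
  have hmu : mu.ht x % 2 = (x + n) % 2 := mu.ht_modEq hx.1 hx.2
  have := lam.ht_nonneg x
  have := mu.ht_le x
  rw [← mul_card_Ico_filter_modEq_left two_pos (h x) (by lia), ← card_filter]
  refine congrArg (fun S : Finset ℤ => 2 * (#S : ℤ)) ?_
  ext z
  simp only [mem_filter, mem_Icc, mem_Ico]
  unfold Int.ModEq
  lia

section Spread

variable {n : ℕ} {P : DyckPath n} {s x : ℤ}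

lemma spreadHt_of_lt (h : x < s) : spreadHt P s x = P.ht (x + 1) := if_pos h

lemma spreadHt_self : spreadHt P s s = P.ht s + 1 := by simp [spreadHt]

lemma spreadHt_of_gt (h : s < x) : spreadHt P s x = P.ht (x - 1) := by
  simp [spreadHt, h.not_gt, h.ne']

lemma sum_spreadHt (hneg : -n ≤ s) (hpos : s ≤ n) :
    ∑ x ∈ Icc (-((n + 1 : ℕ) : ℤ)) (n + 1 : ℕ), spreadHt P s x = P.htSum + 2 * P.ht s + 1 := by
  have hleft : ∑ x ∈ Ico (-(n : ℤ) - 1) s, spreadHt P s x =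
      ∑ x ∈ Ico (-(n : ℤ)) (s + 1), P.ht x := by
    rw [sum_congr rfl fun x hx => spreadHt_of_lt (mem_Ico.1 hx).2, sum_Ico_add', sub_add_cancel]
  have hright : ∑ x ∈ Ico (s + 1) (n + 1 + 1 : ℤ), spreadHt P s x =
      ∑ x ∈ Ico s (n + 1 : ℤ), P.ht x := by
    rw [sum_congr rfl fun x hx => spreadHt_of_gt (by grind), sum_Ico_add_right_sub_eq]
  have hIcc : Icc (-((n + 1 : ℕ) : ℤ)) (n + 1 : ℕ) = Ico (-(n : ℤ) - 1) (n + 1 + 1) := by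
    ext; simp; lia
  calc
    _ = (∑ x ∈ Ico (-(n : ℤ) - 1) s, spreadHt P s x + spreadHt P s s) +
        ∑ x ∈ Ico (s + 1) (n + 1 + 1 : ℤ), spreadHt P s x := by
      rw [sum_Ico_add_eq_sum_Ico_add_one (by lia), sum_Ico_add_sum_Ico _ (by lia) (by lia), hIcc]
    _ = (∑ x ∈ Ico (-(n : ℤ)) s, P.ht x + ∑ x ∈ Ico s (n + 1 : ℤ), P.ht x) + 2 * P.ht s + 1 := by
      rw [hleft, hright, spreadHt_self, ← sum_Ico_add_eq_sum_Ico_add_one hneg]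
      ring
    _ = P.htSum + 2 * P.ht s + 1 := by
      rw [sum_Ico_add_sum_Ico _ hneg (by lia), DyckPath.htSum, Ico_add_one_right_eq_Icc]

/-- The columns of the boxes added by the strip-grow map to a tiling with upper path `P`, spread at
column `s`: the starting columns of the up steps of the spread path to the right of `s`. -/
def stripCols (P : DyckPath n) (s : ℤ) : Finset ℤ :=
  {x ∈ Icc s (n : ℤ) | spreadHt P s (x + 1) = spreadHt P s x + 1}

lemma two_mul_card_stripCols (hneg : -n ≤ s) (hpos : s ≤ n) :
    2 * (#(stripCols P s) : ℤ) = n - s - P.ht s := by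
  rw [stripCols, ← Ico_add_one_right_eq_Icc, two_mul_card_Ico_filter_ascent _ (by lia)]
  · rw [spreadHt_of_gt (by lia), add_sub_cancel_right, P.ht_of_ge le_rfl, spreadHt_self]
    ring
  · intro x hsx hxn
    rcases hsx.eq_or_lt with rfl | hsx
    · rw [spreadHt_of_gt (by lia), spreadHt_self, add_sub_cancel_right]
      lia
    · rw [spreadHt_of_gt (by lia), spreadHt_of_gt hsx]
      simpa using P.ht_add_one (x := x - 1) (by lia) (by lia)

lemma mem_stripCols (hneg : -n ≤ s) :
    x ∈ stripCols P s ↔ x ∈ Icc (-((n + 1 : ℕ) : ℤ)) (n + 1 : ℕ) ∧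
      s ≤ x ∧ spreadHt P s (x + 1) = spreadHt P s x + 1 := by
  simp only [stripCols, mem_filter, mem_Icc]
  refine ⟨fun h => ⟨by lia, h.1.1, h.2⟩, fun ⟨_, hsx, hup⟩ => ⟨⟨hsx, ?_⟩, hup⟩⟩
  by_contra! hnx
  rcases hsx.eq_or_lt with rfl | hsx
  · rw [spreadHt_of_gt (by lia), spreadHt_self, add_sub_cancel_right] at hup
    lia
  rw [spreadHt_of_gt (by lia), spreadHt_of_gt hsx, P.ht_of_ge (by lia), P.ht_of_ge (by lia)] at hup
  lia

lemma mem_spreadTile {t : Finset (ℤ × ℤ)} {z : ℤ} :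
    (x, z) ∈ spreadTile s t ↔
      (x < s ∧ (x + 1, z) ∈ t) ∨ (x = s ∧ (x, z - 1) ∈ t) ∨ (s < x ∧ (x - 1, z) ∈ t) := by
  simp only [spreadTile, mem_union, mem_image, mem_filter, Prod.exists, Prod.mk.injEq]
  grind

lemma spreadTile_injective (s : ℤ) : Function.Injective (spreadTile s) := by
  intro t u h
  ext ⟨x, z⟩
  rcases le_total x s with hxs | hsx
  · have := congrArg ((x - 1, z) ∈ ·) h
    grind [mem_spreadTile]
  · have := congrArg ((x + 1, z) ∈ ·) h
    grind [mem_spreadTile]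

end Spread

lemma IsDyckTile.nonempty {t : Finset (ℤ × ℤ)} (ht : IsDyckTile t) : t.Nonempty := by
  obtain ⟨a, b, f, hab, -, -, -, rfl⟩ := ht
  exact (nonempty_Icc.2 hab).image _

namespace DyckTiling

variable {n : ℕ} (T : DyckTiling n)

lemma two_mul_area : 2 * (T.area : ℤ) = T.upper.htSum - T.lower.htSum :=
  two_mul_card_skewCells T.below

lemma numTiles_le_area : T.numTiles ≤ T.area := by
  rw [area, ← T.cover]
  exact card_le_card_biUnion (fun t ht u hu htu => T.disj t ht u hu htu)
    fun t ht => (T.isDyck t ht).nonempty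

lemma area_eq_zero_of_order_zero (T : DyckTiling 0) : T.area = 0 := by
  have harea := T.two_mul_area
  simp only [DyckPath.htSum, DyckPath.ht_of_ge, Nat.cast_zero, neg_zero, Icc_self, sum_singleton,
    le_refl, sub_self] at harea
  lia

lemma add_two_le_upper_ht {t : Finset (ℤ × ℤ)} (ht : t ∈ T.tiles) {x z : ℤ} (hxz : (x, z) ∈ t) :
    z + 2 ≤ T.upper.ht x := by
  have : (x, z) ∈ skewCells T.lower T.upper := T.cover ▸ mem_biUnion.2 ⟨t, ht, hxz⟩
  exact (mem_filter.1 this).2.2.1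

lemma add_two_le_spreadHt {s : ℤ} {t : Finset (ℤ × ℤ)} (ht : t ∈ spreadTiles s T.tiles) {x z : ℤ}
    (hxz : (x, z) ∈ t) : z + 2 ≤ spreadHt T.upper s x := by
  obtain ⟨u, hu, rfl⟩ := mem_image.1 ht
  rcases mem_spreadTile.1 hxz with ⟨hxs, h⟩ | ⟨rfl, h⟩ | ⟨hsx, h⟩
  · rw [spreadHt_of_lt hxs]
    exact T.add_two_le_upper_ht hu h
  · rw [spreadHt_self]
    linarith [T.add_two_le_upper_ht hu h]
  · rw [spreadHt_of_gt hsx]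
    exact T.add_two_le_upper_ht hu h

end DyckTiling

namespace StripGrowRel

variable {n : ℕ} {T : DyckTiling n} {T' : DyckTiling (n + 1)} {s : ℤ}

lemma lower_htSum (h : StripGrowRel T s T') (hneg : -n ≤ s) (hpos : s ≤ n) :
    T'.lower.htSum = T.lower.htSum + 2 * T.lower.ht s + 1 := by
  rw [← sum_spreadHt hneg hpos]
  exact sum_congr rfl fun x _ => h.1 x

lemma upper_htSum (h : StripGrowRel T s T') (hneg : -n ≤ s) (hpos : s ≤ n) :
    T'.upper.htSum = T.upper.htSum + 2 * T.upper.ht s + 1 + 2 * #(stripCols T.upper s) := by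
  have hht : ∀ x, T'.upper.ht x = spreadHt T.upper s x +
      if s ≤ x ∧ spreadHt T.upper s (x + 1) = spreadHt T.upper s x + 1 then 2 else 0 := by
    intro x
    rw [h.2.1]
    split_ifs <;> ring
  have hcols : stripCols T.upper s = {x ∈ Icc (-((n + 1 : ℕ) : ℤ)) (n + 1 : ℕ) |
      s ≤ x ∧ spreadHt T.upper s (x + 1) = spreadHt T.upper s x + 1} := by
    ext x
    rw [mem_stripCols hneg, mem_filter]
  rw [← sum_spreadHt hneg hpos, hcols, DyckPath.htSum, sum_congr rfl fun x _ => hht x,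
    sum_add_distrib, ← sum_filter, sum_const, nsmul_eq_mul, mul_comm (2 : ℤ)]

lemma area_eq (h : StripGrowRel T s T') (hneg : -n ≤ s) (hpos : s ≤ n) :
    (T'.area : ℤ) = T.area + (T.upper.ht s - T.lower.ht s) + #(stripCols T.upper s) := by
  linarith [T.two_mul_area, T'.two_mul_area, h.lower_htSum hneg hpos, h.upper_htSum hneg hpos]

lemma numTiles_eq (h : StripGrowRel T s T') :
    T'.numTiles = T.numTiles + #(stripCols T.upper s) := by
  have hdisj : Disjoint (spreadTiles s T.tiles)
      ((stripCols T.upper s).image fun x => {(x, spreadHt T.upper s x)}) := by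
    rw [disjoint_left]
    intro t ht htnew
    obtain ⟨x, -, rfl⟩ := mem_image.1 htnew
    have := T.add_two_le_spreadHt ht (mem_singleton_self _)
    lia
  have hinj : Function.Injective fun x => ({(x, spreadHt T.upper s x)} : Finset (ℤ × ℤ)) :=
    fun x y hxy => congrArg Prod.fst (singleton_injective hxy)
  calc
    #T'.tiles = #(spreadTiles s T.tiles) +
        #((stripCols T.upper s).image fun x => ({(x, spreadHt T.upper s x)} : Finset (ℤ × ℤ))) := by
      rw [h.2.2, ← stripCols, card_union_of_disjoint hdisj]
    _ = T.numTiles + #(stripCols T.upper s) := by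
      rw [spreadTiles, card_image_of_injective _ (spreadTile_injective s),
        card_image_of_injective _ hinj, DyckTiling.numTiles]

lemma area_add_numTiles_eq (h : StripGrowRel T s T') (hneg : -n ≤ s) (hpos : s ≤ n) :
    (T'.area : ℤ) + T'.numTiles = T.area + T.numTiles + (n - s - T.lower.ht s) := by
  rw [h.area_eq hneg hpos, h.numTiles_eq, Nat.cast_add]
  linarith [two_mul_card_stripCols (P := T.upper) hneg hpos]

end StripGrowRel

/-- The number of letters of the word `w` smaller than `t`. -/
def countLT {n : ℕ} (w : Fin n → ℕ) (t : ℕ) : ℕ := #{j | w j < t}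

section CountLT

variable {n : ℕ}

lemma countLT_mono (w : Fin n → ℕ) : Monotone (countLT w) := fun _ _ htu =>
  card_le_card (monotone_filter_right _ fun _ _ h => h.trans_le htu)

lemma countLT_le (w : Fin n → ℕ) (t : ℕ) : countLT w t ≤ n :=
  (card_le_univ _).trans (Fintype.card_fin n).le

lemma countLT_castSucc (w : Fin (n + 1) → ℕ) (t : ℕ) :
    countLT w t = countLT (w ∘ Fin.castSucc) t + if w (Fin.last n) < t then 1 else 0 := by
  simp only [countLT, card_filter, Fin.sum_univ_castSucc, Function.comp_apply]

lemma countLT_eq_of_notMem_Ico {w : Fin n → ℕ} {a b t : ℕ} (hw : ∀ j, w j ∉ Set.Ico a b)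
    (hat : a ≤ t) (htb : t ≤ b) : countLT w t = countLT w a := by
  refine congrArg card (filter_congr fun j _ => ?_)
  have := hw j
  rw [Set.mem_Ico] at this
  lia

lemma countLT_add_card_filter_gt {w : Fin n → ℕ} {a : ℕ} (hw : ∀ j, w j ≠ a) :
    countLT w a + #{j | a < w j} = n := by
  have hgt : univ.filter (a < w ·) = univ.filter (¬ w · < a) :=
    filter_congr fun j _ => by have := hw j; lia
  rw [countLT, hgt, card_filter_add_card_filter_not, card_univ, Fintype.card_fin]

lemma wordInv_castSucc (w : Fin (n + 1) → ℕ) :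
    wordInv w = wordInv (w ∘ Fin.castSucc) + #{j : Fin n | w (Fin.last n) < w j.castSucc} := by
  simp only [wordInv, card_filter, Fintype.sum_prod_type, Fin.sum_univ_castSucc, sum_add_distrib,
    Fin.castSucc_lt_last, Fin.not_lt.2 (Fin.le_last _), Fin.castSucc_lt_castSucc_iff, true_and,
    false_and, if_false, sum_const_zero, add_zero, Function.comp_apply]

end CountLT

/-- The growth sequence of a labeled family of chords with left endpoints `l` and right endpoints
`r`. It is `seqOf` without the ambient Dyck path, so that the last chord can be removed. -/
def growthSeq {n : ℕ} (l r : Fin n → ℕ) (i : Fin n) : ℕ :=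
  #{j | j < i ∧ l j < l i} + #{j | j < i ∧ r j < l i}

section GrowthSeq

variable {n : ℕ} (l r : Fin (n + 1) → ℕ)

lemma growthSeq_last : growthSeq l r (Fin.last n) =
    countLT (l ∘ Fin.castSucc) (l (Fin.last n)) + countLT (r ∘ Fin.castSucc) (l (Fin.last n)) := by
  simp only [growthSeq, countLT, card_filter, Fin.sum_univ_castSucc, Fin.castSucc_lt_last,
    lt_irrefl, true_and, false_and, if_false, add_zero, Function.comp_apply]

lemma growthSeq_castSucc (i : Fin n) :
    growthSeq l r i.castSucc = growthSeq (l ∘ Fin.castSucc) (r ∘ Fin.castSucc) i := by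
  simp only [growthSeq, card_filter, Fin.sum_univ_castSucc, Fin.not_lt.2 (Fin.le_last _),
    Fin.castSucc_lt_castSucc_iff, false_and, if_false, add_zero, Function.comp_apply]

end GrowthSeq

/-- Words `l` and `r` of left and right endpoints of labeled chords such that no half-open interval
`[l i, r i)` contains an endpoint of a chord with smaller label. The endpoints need not be
consecutive numbers, so that the last chord can be removed without moving the others. -/
structure IsNaturalEndpoints {n : ℕ} (l r : Fin n → ℕ) : Prop where
  left_lt_right : ∀ i, l i < r i
  left_notMem_Ico : ∀ i j, j < i → l j ∉ Set.Ico (l i) (r i)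
  right_notMem_Ico : ∀ i j, j < i → r j ∉ Set.Ico (l i) (r i)

lemma IsNaturalEndpoints.left_ne {n : ℕ} {l r : Fin n → ℕ} (h : IsNaturalEndpoints l r)
    {i j : Fin n} (hji : j < i) : l j ≠ l i := fun hl =>
  h.left_notMem_Ico i j hji ⟨hl.ge, hl.trans_lt (h.left_lt_right i)⟩

lemma IsNaturalEndpoints.castSucc {n : ℕ} {l r : Fin (n + 1) → ℕ} (h : IsNaturalEndpoints l r) :
    IsNaturalEndpoints (l ∘ Fin.castSucc) (r ∘ Fin.castSucc) where
  left_lt_right i := h.left_lt_right i.castSucc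
  left_notMem_Ico i j hji := h.left_notMem_Ico i.castSucc j.castSucc hji
  right_notMem_Ico i j hji := h.right_notMem_Ico i.castSucc j.castSucc hji

/-- The path `P` is obtained by reading the numbers in increasing order, with an up step for each
letter of `l` and a down step for each letter of `r`. -/
def HasEndpoints {n : ℕ} (P : DyckPath n) (l r : Fin n → ℕ) : Prop :=
  ∀ t, P.ht ((countLT l t : ℤ) + countLT r t - n) = (countLT l t : ℤ) - countLT r t

lemma HasEndpoints.spread {n : ℕ} {P : DyckPath n} {P' : DyckPath (n + 1)}
    {l r : Fin (n + 1) → ℕ} (hlr : IsNaturalEndpoints l r)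
    (h : HasEndpoints P (l ∘ Fin.castSucc) (r ∘ Fin.castSucc))
    (hP' : ∀ x, P'.ht x = spreadHt P ((growthSeq l r (Fin.last n) : ℤ) - n) x) :
    HasEndpoints P' l r := by
  intro t
  have hab := hlr.left_lt_right (Fin.last n)
  have hl := countLT_eq_of_notMem_Ico (w := l ∘ Fin.castSucc) (t := t) fun j =>
    hlr.left_notMem_Ico _ _ j.castSucc_lt_last
  have hr := countLT_eq_of_notMem_Ico (w := r ∘ Fin.castSucc) (t := t) fun j =>
    hlr.right_notMem_Ico _ _ j.castSucc_lt_last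
  rw [hP', growthSeq_last, countLT_castSucc l, countLT_castSucc r]
  have ht := h t
  have ha := h (l (Fin.last n))
  have hlmono := countLT_mono (l ∘ Fin.castSucc)
  have hrmono := countLT_mono (r ∘ Fin.castSucc)
  generalize l (Fin.last n) = a at *
  generalize r (Fin.last n) = b at *
  push_cast
  rcases le_or_gt t a with hta | hat
  · have := hlmono hta
    have := hrmono hta
    rw [if_neg hta.not_gt, if_neg (by lia), spreadHt_of_lt (by lia)]
    convert ht using 2 <;> ring
  rcases le_or_gt t b with htb | hbt
  · rw [if_pos hat, if_neg htb.not_gt, hl hat.le htb, hr hat.le htb]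
    convert spreadHt_self using 2
    · ring
    · rw [ha]; ring
  · have := hlmono hat.le
    have := hrmono hat.le
    rw [if_pos hat, if_pos hbt, spreadHt_of_gt (by lia), add_sub_add_right_eq_sub]
    convert ht using 2
    ring

namespace IsDTS

lemma lower_hasEndpoints {n : ℕ} {l r : Fin n → ℕ} {T : DyckTiling n}
    (hT : IsDTS n (growthSeq l r) T) (hlr : IsNaturalEndpoints l r) :
    HasEndpoints T.lower l r := by
  induction n with
  | zero => exact fun t => by simp [countLT, DyckPath.ht_of_ge]
  | succ n ih =>
    cases hT with | cons _ _ T₀ _ hT₀ hgrow =>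
    simp only [growthSeq_castSucc] at hT₀
    exact (ih hT₀ hlr.castSucc).spread hlr hgrow.1

lemma area_add_numTiles_eq {n : ℕ} {l r : Fin n → ℕ} {T : DyckTiling n}
    (hT : IsDTS n (growthSeq l r) T) (hlr : IsNaturalEndpoints l r) :
    T.area + T.numTiles = 2 * wordInv l := by
  induction n with
  | zero =>
    have htiles := T.numTiles_le_area
    have hinv : wordInv l = 0 := by simp [wordInv]
    rw [T.area_eq_zero_of_order_zero] at htiles ⊢
    lia
  | succ n ih =>
    cases hT with | cons _ _ T₀ _ hT₀ hgrow =>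
    simp only [growthSeq_castSucc] at hT₀
    have hstep := ih hT₀ hlr.castSucc
    have hht := hT₀.lower_hasEndpoints hlr.castSucc (l (Fin.last n))
    have hl := countLT_le (l ∘ Fin.castSucc) (l (Fin.last n))
    have hr := countLT_le (r ∘ Fin.castSucc) (l (Fin.last n))
    rw [growthSeq_last, Nat.cast_add] at hgrow
    have hgrowth := hgrow.area_add_numTiles_eq (by lia) (by lia)
    rw [hht] at hgrowth
    have hgt := countLT_add_card_filter_gt (w := l ∘ Fin.castSucc) (a := l (Fin.last n))
      fun j => hlr.left_ne j.castSucc_lt_last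
    simp only [Function.comp_apply] at hgt
    rw [wordInv_castSucc]
    lia

end IsDTS

namespace IsChord

variable {n : ℕ} {P : DyckPath n} {p q p' q' : ℕ}

lemma right_lt_of_left_lt (h : IsChord P p q) (h' : IsChord P p' q') (hp : p < p') (hq : p' < q) :
    q' < q := by
  obtain ⟨-, -, -, -, hend, habove⟩ := h
  obtain ⟨-, -, -, -, hend', habove'⟩ := h'
  have hlt := habove p' hp hq.le
  by_contra! hle
  rcases hle.eq_or_lt with rfl | hq'
  · lia
  · have := habove' (q + 1) (by lia) (by lia)
    lia

lemma left_lt_of_right_lt (h : IsChord P p q) (h' : IsChord P p' q') (hp : p ≤ q') (hq : q' < q) :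
    p < p' := by
  have hne : p ≠ q' := by
    rintro rfl
    obtain ⟨_, hup⟩ := h.2.2.1
    obtain ⟨_, hdown⟩ := h'.2.2.2.1
    simp [hup] at hdown
  obtain ⟨-, -, -, -, -, habove⟩ := h
  obtain ⟨-, -, -, -, hend', habove'⟩ := h'
  have hlt := habove (q' + 1) (by lia) (by lia)
  by_contra! hle
  rcases hle.eq_or_lt with rfl | hp'
  · lia
  · have := habove' p hp' hp
    lia

end IsChord

lemma ChordLabeling.isNaturalEndpoints {n : ℕ} {P : DyckPath n} (C : ChordLabeling P) :
    IsNaturalEndpoints C.l C.r where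
  left_lt_right i := (C.chord i).1
  left_notMem_Ico i j hji hmem := by
    have hl : C.l i < C.l j := hmem.1.lt_of_ne (C.inj.ne hji.ne')
    have hr := (C.chord i).right_lt_of_left_lt (C.chord j) hl hmem.2
    exact hji.asymm (C.natural j i hl hr)
  right_notMem_Ico i j hji hmem := by
    have hl := (C.chord i).left_lt_of_right_lt (C.chord j) hmem.1 hmem.2
    exact hji.asymm (C.natural j i hl hmem.2)

lemma IsStandardization.wordInv_eq {n : ℕ} {w : Fin n → ℕ} {σ : Equiv.Perm (Fin n)}
    (h : IsStandardization w σ) : wordInv w = permInv σ :=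
  congrArg card (filter_congr fun x _ => and_congr_right fun _ => (h x.2 x.1).symm)

/-- For each Dyck path `λ` of order `n` and each linear extension
`σ ∈ 𝓛(P_λ)`, `art(DTS(λ,σ)) = inv(σ)`. -/
theorem art_DTS_eq_inv (n : ℕ) (lam : DyckPath n) (σ : Equiv.Perm (Fin n))
    (hσ : LinExt lam σ) (T : DyckTiling n) (hT : IsDTSof lam σ T) :
    T.art = permInv σ := by
  obtain ⟨C, hC, hDTS⟩ := hT
  have hcount : T.area + T.numTiles = 2 * wordInv C.l :=
    hDTS.area_add_numTiles_eq C.isNaturalEndpoints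
  rw [DyckTiling.art, hcount, hC.wordInv_eq]
  lia

end
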